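/- Every element b of F_n is represented by an irreducible braid word (one admitting no bigon reduction), and any two irreducible braid words representing b are strongly equivalent. Equivalently, the bigon-reduction rewriting system on braid words modulo strong equivalence is terminating and confluent. -/

import Mathlib

set_option maxHeartbeats 1000000

namespace OneTermBracket

/-- Letters (generators) of free braid words on `n` strands:
`zeta i` is a classical crossing, `tau i` a virtual crossing, `1 ≤ i+1 ≤ n-1`. -/
inductive Letter (n : ℕ) where
  | zeta (i : Fin (n-1))
  | tau  (i : Fin (n-1))
deriving DecidableEq

namespace Letter

def idx {n : ℕ} : Letter n → Fin (n-1)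
  | zeta i => i
  | tau i => i

def isZeta {n : ℕ} : Letter n → Bool
  | zeta _ => true
  | tau _ => false

end Letter

def lo {n : ℕ} (i : Fin (n-1)) : Fin n := ⟨i.1, by have := i.2; omega⟩
def hi {n : ℕ} (i : Fin (n-1)) : Fin n := ⟨i.1 + 1, by have := i.2; omega⟩

/-- The transposition `(i, i+1)` of `{1, …, n}`. -/
def sPerm {n : ℕ} (i : Fin (n-1)) : Equiv.Perm (Fin n) := Equiv.swap (lo i) (hi i)

/-- Each letter acts on positions as the transposition `(i, i+1)`. -/
def transOf {n : ℕ} (g : Letter n) : Equiv.Perm (Fin n) := sPerm g.idx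

/-- The permutation realized by the prefix of length `j` of a braid word,
mapping the top label of a strand to its position at level `j`. -/
def prefPerm {n : ℕ} (w : List (Letter n)) (j : ℕ) : Equiv.Perm (Fin n) :=
  (((w.take j).map transOf).reverse).prod

/-- The permutation `P(β)` of a braid word (top endpoint `k` goes to bottom endpoint `P k`). -/
def permOf {n : ℕ} (w : List (Letter n)) : Equiv.Perm (Fin n) :=
  ((w.map transOf).reverse).prod

/-- The unordered pair of (top labels of the) strands crossing at position `j` of `w`. -/
def strandsAt {n : ℕ} (w : List (Letter n)) (j : ℕ) : Option (Sym2 (Fin n)) :=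
  (w[j]?).map fun g => s((prefPerm w j)⁻¹ (lo g.idx), (prefPerm w j)⁻¹ (hi g.idx))

/-- Component-wise parity determined by a partition `{1,…,n} = N₁ ⊔ N₂` (encoded by
`c : Fin n → Bool`): a classical crossing is odd (`1`) iff its two strands lie in
different parts. Non-classical positions get `0`. -/
def cwParity {n : ℕ} (c : Fin n → Bool) (w : List (Letter n)) (j : ℕ) : ZMod 2 :=
  match w[j]? with
  | some (.zeta i) =>
      if c ((prefPerm w j)⁻¹ (lo i)) = c ((prefPerm w j)⁻¹ (hi i)) then 0 else 1
  | _ => 0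

/-- The defining relations of `F_n` and `FB_n` which do not involve
`ζ_i² = 1` or the classical third Reidemeister move ("strong" moves). -/
inductive RelStrong (n : ℕ) : List (Letter n) → List (Letter n) → Prop
  | tt (i : Fin (n-1)) : RelStrong n [.tau i, .tau i] []
  | virt (i : Fin (n-1)) : RelStrong n [.zeta i, .tau i] [.tau i, .zeta i]
  | far_zz (i j : Fin (n-1)) (h : 2 ≤ Nat.dist i j) :
      RelStrong n [.zeta i, .zeta j] [.zeta j, .zeta i]
  | far_zt (i j : Fin (n-1)) (h : 2 ≤ Nat.dist i j) :
      RelStrong n [.zeta i, .tau j] [.tau j, .zeta i]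
  | far_tt (i j : Fin (n-1)) (h : 2 ≤ Nat.dist i j) :
      RelStrong n [.tau i, .tau j] [.tau j, .tau i]
  | r3v (i j : Fin (n-1)) (h : (j:ℕ) = (i:ℕ) + 1) :
      RelStrong n [.tau i, .tau j, .tau i] [.tau j, .tau i, .tau j]
  | semi (i j : Fin (n-1)) (h : (j:ℕ) = (i:ℕ) + 1) :
      RelStrong n [.tau i, .tau j, .zeta i] [.zeta j, .tau i, .tau j]

/-- The defining relations of `F_n`. -/
inductive RelF (n : ℕ) : List (Letter n) → List (Letter n) → Prop
  | strong {r1 r2} : RelStrong n r1 r2 → RelF n r1 r2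
  | zz (i : Fin (n-1)) : RelF n [.zeta i, .zeta i] []

/-- The defining relations of the free braid group `FB_n`. -/
inductive RelFB (n : ℕ) : List (Letter n) → List (Letter n) → Prop
  | ofF {r1 r2} : RelF n r1 r2 → RelFB n r1 r2
  | r3c (i j : Fin (n-1)) (h : (j:ℕ) = (i:ℕ) + 1) :
      RelFB n [.zeta i, .zeta j, .zeta i] [.zeta j, .zeta i, .zeta j]

/-- One application of a relation from `R` inside a word. -/
def StepOf {n : ℕ} (R : List (Letter n) → List (Letter n) → Prop)
    (w1 w2 : List (Letter n)) : Prop :=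
  ∃ A B r1 r2, R r1 r2 ∧ w1 = A ++ r1 ++ B ∧ w2 = A ++ r2 ++ B

/-- Strong equivalence: all moves of `F_n` except `ζ_i² = 1`. -/
def StrongEq {n : ℕ} (w1 w2 : List (Letter n)) : Prop :=
  Relation.EqvGen (StepOf (RelStrong n)) w1 w2

/-- Equivalence of braid words as elements of `F_n`. -/
def EqF {n : ℕ} (w1 w2 : List (Letter n)) : Prop :=
  Relation.EqvGen (StepOf (RelF n)) w1 w2

/-- Equivalence of braid words as elements of the free braid group `FB_n`. -/
def EqFB {n : ℕ} (w1 w2 : List (Letter n)) : Prop :=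
  Relation.EqvGen (StepOf (RelFB n)) w1 w2

/-- The parity axioms, for a parity `P` defined on the class `C` of braid words.
`P w j` is the parity of the crossing at position `j` of `w` (only classical
positions matter). -/
structure IsParity {n : ℕ} (C : List (Letter n) → Prop)
    (P : List (Letter n) → ℕ → ZMod 2) : Prop where
  /-- Crossings not taking part in a relation keep their parity (part before). -/
  untouched_left : ∀ A B r1 r2, RelFB n r1 r2 →
    C (A ++ r1 ++ B) → C (A ++ r2 ++ B) → ∀ j < A.length,
    P (A ++ r1 ++ B) j = P (A ++ r2 ++ B) j
  /-- Crossings not taking part in a relation keep their parity (part after). -/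
  untouched_right : ∀ A B r1 r2, RelFB n r1 r2 →
    C (A ++ r1 ++ B) → C (A ++ r2 ++ B) → ∀ j < B.length,
    P (A ++ r1 ++ B) (A.length + r1.length + j) = P (A ++ r2 ++ B) (A.length + r2.length + j)
  /-- In commutation-type relations (far commutativity, virtualization), the two
  letters keep their parities. -/
  comm : ∀ A B x y, RelFB n [x, y] [y, x] →
    C (A ++ [x, y] ++ B) → C (A ++ [y, x] ++ B) →
    P (A ++ [x, y] ++ B) A.length = P (A ++ [y, x] ++ B) (A.length + 1) ∧
    P (A ++ [x, y] ++ B) (A.length + 1) = P (A ++ [y, x] ++ B) A.length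
  /-- In a classical second Reidemeister move both crossings have the same parity. -/
  r2c : ∀ A B (i : Fin (n-1)),
    C (A ++ [.zeta i, .zeta i] ++ B) → C (A ++ B) →
    P (A ++ [.zeta i, .zeta i] ++ B) A.length
      = P (A ++ [.zeta i, .zeta i] ++ B) (A.length + 1)
  /-- In a semivirtual move, the classical crossing keeps its parity. -/
  semiv : ∀ A B (i j : Fin (n-1)), (j:ℕ) = (i:ℕ) + 1 →
    C (A ++ [.tau i, .tau j, .zeta i] ++ B) →
    C (A ++ [.zeta j, .tau i, .tau j] ++ B) →
    P (A ++ [.tau i, .tau j, .zeta i] ++ B) (A.length + 2)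
      = P (A ++ [.zeta j, .tau i, .tau j] ++ B) A.length
  /-- In a classical third Reidemeister move the number of odd crossings is even. -/
  r3_even : ∀ A B (i j : Fin (n-1)), (j:ℕ) = (i:ℕ) + 1 →
    C (A ++ [.zeta i, .zeta j, .zeta i] ++ B) →
    C (A ++ [.zeta j, .zeta i, .zeta j] ++ B) →
    P (A ++ [.zeta i, .zeta j, .zeta i] ++ B) A.length
      + P (A ++ [.zeta i, .zeta j, .zeta i] ++ B) (A.length + 1)
      + P (A ++ [.zeta i, .zeta j, .zeta i] ++ B) (A.length + 2) = 0
  /-- In a classical third Reidemeister move, upper/middle/lower crossings on the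
  left correspond to lower/middle/upper crossings on the right with equal parities. -/
  r3_corr : ∀ A B (i j : Fin (n-1)), (j:ℕ) = (i:ℕ) + 1 →
    C (A ++ [.zeta i, .zeta j, .zeta i] ++ B) →
    C (A ++ [.zeta j, .zeta i, .zeta j] ++ B) →
    P (A ++ [.zeta i, .zeta j, .zeta i] ++ B) A.length
      = P (A ++ [.zeta j, .zeta i, .zeta j] ++ B) (A.length + 2) ∧
    P (A ++ [.zeta i, .zeta j, .zeta i] ++ B) (A.length + 1)
      = P (A ++ [.zeta j, .zeta i, .zeta j] ++ B) (A.length + 1) ∧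
    P (A ++ [.zeta i, .zeta j, .zeta i] ++ B) (A.length + 2)
      = P (A ++ [.zeta j, .zeta i, .zeta j] ++ B) A.length

/-- Delete from `w` all classical letters whose parity (given by `par`) is even. -/
def deleteEven {n : ℕ} (w : List (Letter n)) (par : ℕ → ZMod 2) : List (Letter n) :=
  (List.range w.length).filterMap fun j =>
    (w[j]?).bind fun g =>
      match g with
      | .zeta i => if par j = 0 then none else some (.zeta i)
      | .tau i => some (.tau i)

/-- The one-term parity bracket: delete all even classical crossings. -/
def bracket {n : ℕ} (P : List (Letter n) → ℕ → ZMod 2) (w : List (Letter n)) :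
    List (Letter n) :=
  deleteEven w (P w)

/-- Positions of classical crossings of a word. -/
def ZetaPos {n : ℕ} (w : List (Letter n)) : Set ℕ :=
  {j | ∃ i, w[j]? = some (Letter.zeta i)}

/-- The classical crossings at positions `j1 < j2` form a bigon: they lie on the same
pair of strands, and no classical crossing between them lies on either of those strands. -/
def IsBigon {n : ℕ} (w : List (Letter n)) (j1 j2 : ℕ) : Prop :=
  j1 < j2 ∧ j1 ∈ ZetaPos w ∧ j2 ∈ ZetaPos w ∧
  strandsAt w j1 = strandsAt w j2 ∧
  ∀ k, j1 < k → k < j2 → k ∈ ZetaPos w →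
    ∀ e e', strandsAt w j1 = some e → strandsAt w k = some e' → ∀ a ∈ e, a ∉ e'

/-- Delete the letters at two given positions. -/
def delete2 {n : ℕ} (w : List (Letter n)) (j1 j2 : ℕ) : List (Letter n) :=
  (w.eraseIdx (max j1 j2)).eraseIdx (min j1 j2)

/-- One bigon reduction. -/
def BigonStep {n : ℕ} (w w' : List (Letter n)) : Prop :=
  ∃ j1 j2, IsBigon w j1 j2 ∧ w' = delete2 w j1 j2

/-- A word is irreducible if it admits no bigon reduction. -/
def Irreducible {n : ℕ} (w : List (Letter n)) : Prop := ¬ ∃ j1 j2, IsBigon w j1 j2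

/-- Number of classical letters of a word. -/
def countZeta {n : ℕ} (w : List (Letter n)) : ℕ := (w.filter Letter.isZeta).length

/-- `φ` is an isomorphism of the decorated graphs `Γ(w1) ≅ Γ(w2)`, encoded
combinatorially: a bijection of classical crossings preserving the pair of strands
through each crossing, the order of crossings along each strand, and the endpoint
structure (the permutation). -/
structure IsGammaIso {n : ℕ} (w1 w2 : List (Letter n)) (φ : ℕ → ℕ) : Prop where
  maps : ∀ j ∈ ZetaPos w1, φ j ∈ ZetaPos w2
  inj : ∀ j ∈ ZetaPos w1, ∀ j' ∈ ZetaPos w1, φ j = φ j' → j = j'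
  surj : ∀ k ∈ ZetaPos w2, ∃ j ∈ ZetaPos w1, φ j = k
  strands : ∀ j ∈ ZetaPos w1, strandsAt w2 (φ j) = strandsAt w1 j
  order : ∀ j ∈ ZetaPos w1, ∀ j' ∈ ZetaPos w1, j < j' →
    (∃ e e' a, strandsAt w1 j = some e ∧ strandsAt w1 j' = some e' ∧ a ∈ e ∧ a ∈ e') →
    φ j < φ j'
  perm : permOf w1 = permOf w2

/-! ### The groups `F_n` and `FB_n` as presented groups -/

/-- Generators: `Sum.inl i` is the classical generator `ζ_i`,
`Sum.inr i` is the virtual generator `τ_i`. -/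
abbrev GGen (n : ℕ) := Fin (n-1) ⊕ Fin (n-1)

def zg {n : ℕ} (i : Fin (n-1)) : FreeGroup (GGen n) := FreeGroup.of (Sum.inl i)
def tg {n : ℕ} (i : Fin (n-1)) : FreeGroup (GGen n) := FreeGroup.of (Sum.inr i)

/-- The relators of `F_n`. -/
def FRels (n : ℕ) : Set (FreeGroup (GGen n)) :=
  (⋃ i, {zg i * zg i}) ∪ (⋃ i, {tg i * tg i}) ∪
  (⋃ i, {zg i * tg i * (tg i * zg i)⁻¹}) ∪
  (⋃ (i : Fin (n-1)) (j : Fin (n-1)) (_ : 2 ≤ Nat.dist i j),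
    {zg i * zg j * (zg j * zg i)⁻¹, zg i * tg j * (tg j * zg i)⁻¹,
     tg i * tg j * (tg j * tg i)⁻¹}) ∪
  (⋃ (i : Fin (n-1)) (j : Fin (n-1)) (_ : (j:ℕ) = (i:ℕ) + 1),
    {tg i * tg j * tg i * (tg j * tg i * tg j)⁻¹,
     tg i * tg j * zg i * (zg j * tg i * tg j)⁻¹})

/-- The relators of `FB_n`: those of `F_n` together with the classical third
Reidemeister relation. -/
def FBRels (n : ℕ) : Set (FreeGroup (GGen n)) :=
  FRels n ∪
  (⋃ (i : Fin (n-1)) (j : Fin (n-1)) (_ : (j:ℕ) = (i:ℕ) + 1),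
    {zg i * zg j * zg i * (zg j * zg i * zg j)⁻¹})

/-- The group `F_n`. -/
abbrev FGrp (n : ℕ) := PresentedGroup (FRels n)

/-- The free braid group `FB_n`. -/
abbrev FBGrp (n : ℕ) := PresentedGroup (FBRels n)

def zF {n : ℕ} (i : Fin (n-1)) : FGrp n := PresentedGroup.of (Sum.inl i)
def tF {n : ℕ} (i : Fin (n-1)) : FGrp n := PresentedGroup.of (Sum.inr i)

/-- Evaluation of a braid word in `F_n`. -/
def evalF {n : ℕ} (w : List (Letter n)) : FGrp n :=
  (w.map fun g => match g with
    | Letter.zeta i => zF i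
    | Letter.tau i => tF i).prod

/-- For each unordered pair of strands, the mod-2 number of classical letters of `w`
at which these two strands cross (strand labels traced from the top). -/
def crossPar {n : ℕ} : List (Letter n) → Sym2 (Fin n) → ZMod 2
  | [], _ => 0
  | g :: rest, e =>
    (match g with
     | Letter.zeta i => if e = s(lo i, hi i) then (1 : ZMod 2) else 0
     | Letter.tau _ => 0) + crossPar rest (e.map (transOf g))

/-! ### Chord diagrams and the Gaussian parity -/

/-- The setoid on strands given by `SameCycle`; its classes are the orbits of `σ`,
i.e. the components of the closure. -/
def sameCycleSetoid {n : ℕ} (σ : Equiv.Perm (Fin n)) : Setoid (Fin n) :=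
  ⟨σ.SameCycle, ⟨Equiv.Perm.SameCycle.refl σ, Equiv.Perm.SameCycle.symm,
    Equiv.Perm.SameCycle.trans⟩⟩

/-- The rank of a strand in the single cycle of `σ` starting from strand `0`. -/
noncomputable def rankIn {n : ℕ} [NeZero n] (σ : Equiv.Perm (Fin n)) (a : Fin n) : ℕ :=
  ((Function.invFun (fun k : Fin n => (σ ^ (k : ℕ)) 0) a : Fin n) : ℕ)

/-- Coordinates on the core circle of the two endpoints of the chord of the classical
crossing at position `j` (the circle traverses the strands in the cyclic order of `σ`). -/
noncomputable def chordEnds {n : ℕ} [NeZero n] (w : List (Letter n))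
    (σ : Equiv.Perm (Fin n)) (j : ℕ) : ℕ × ℕ :=
  match w[j]? with
  | some (Letter.zeta i) =>
      (rankIn σ ((prefPerm w j)⁻¹ (lo i)) * w.length + j,
       rankIn σ ((prefPerm w j)⁻¹ (hi i)) * w.length + j)
  | _ => (0, 0)

/-- Two chords are linked iff the endpoints of one separate the endpoints of the
other on the core circle. -/
def LinkedChords {n : ℕ} [NeZero n] (w : List (Letter n)) (σ : Equiv.Perm (Fin n))
    (j k : ℕ) : Prop :=
  Xor' (min (chordEnds w σ j).1 (chordEnds w σ j).2 < (chordEnds w σ k).1 ∧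
        (chordEnds w σ k).1 < max (chordEnds w σ j).1 (chordEnds w σ j).2)
       (min (chordEnds w σ j).1 (chordEnds w σ j).2 < (chordEnds w σ k).2 ∧
        (chordEnds w σ k).2 < max (chordEnds w σ j).1 (chordEnds w σ j).2)

/-- The Gaussian parity of the classical crossing at position `j`: the mod-2 number
of chords linked with its chord. Even (`0`) iff linked with evenly many chords. -/
noncomputable def gaussParity {n : ℕ} [NeZero n] (w : List (Letter n))
    (σ : Equiv.Perm (Fin n)) (j : ℕ) : ZMod 2 :=
  (Nat.card {k : ℕ // k < w.length ∧ k ∈ ZetaPos w ∧ k ≠ j ∧ LinkedChords w σ j k} : ZMod 2)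

/-!
A braid word is determined up to virtual moves by its permutation and its *crossing word*, the
sequence of pairs of strands that cross classically. In these terms `F_n` is the semidirect product
of `S_n` with the right-angled Coxeter group on the pairs of strands in which disjoint pairs
commute: the generator of a pair is the pure element `σ ζᵢ τᵢ σ⁻¹`, which depends only on the pair.
Strong equivalence forgets the relation `ζᵢ² = 1` and so only permits commutations in the crossing
word, and a word is irreducible exactly when its crossing word is reduced. A bigon cancels in `F_n`,
at the price of two virtual crossings that keep the permutation, which gives existence. Uniqueness
is the uniqueness, up to commutations, of reduced words in a right-angled Coxeter group: its
generators act on reduced words up to commutations by inserting or cancelling a letter.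
-/

section RightAngledWords

variable {α : Type*} {G : SimpleGraph α}

/-- Equality of words in the trace monoid (partially commutative monoid) of `G`: adjacent letters
of a word may be exchanged when they are joined by an edge of `G`. -/
inductive TraceEq (G : SimpleGraph α) : List α → List α → Prop
  | refl (L) : TraceEq G L L
  | symm {L M} : TraceEq G L M → TraceEq G M L
  | trans {L M N} : TraceEq G L M → TraceEq G M N → TraceEq G L N
  | cons (x) {L M} : TraceEq G L M → TraceEq G (x :: L) (x :: M)
  | swap {x y} (L) : G.Adj x y → TraceEq G (x :: y :: L) (y :: x :: L)

/-- Some occurrence of the letter `e` in `L` can be moved to the front of `L` by commutations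
along the edges of `G`. -/
def IsInitial (G : SimpleGraph α) (e : α) (L : List α) : Prop :=
  ∃ A B, L = A ++ e :: B ∧ ∀ x ∈ A, G.Adj e x

theorem not_isInitial_nil (e : α) : ¬ IsInitial G e [] := by
  simp [IsInitial]

theorem isInitial_cons_iff {e x : α} {L : List α} :
    IsInitial G e (x :: L) ↔ x = e ∨ G.Adj e x ∧ IsInitial G e L := by
  constructor
  · rintro ⟨_ | ⟨y, A⟩, B, hL, hA⟩
    · exact .inl (List.cons.inj hL).1
    · obtain ⟨rfl, rfl⟩ := List.cons.inj hL
      exact .inr ⟨hA _ (by simp), A, B, rfl, fun z hz => hA z (by simp [hz])⟩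
  · rintro (rfl | ⟨hx, A, B, rfl, hA⟩)
    · exact ⟨[], L, rfl, by simp⟩
    · exact ⟨x :: A, B, rfl, by simpa [hx] using hA⟩

/-- A word over the generators of the right-angled Coxeter group of `G` is reduced if no two equal
letters in it can be made adjacent by commutations. -/
def Reduced (G : SimpleGraph α) (L : List α) : Prop :=
  ∀ e B, e :: B <:+ L → ¬ IsInitial G e B

theorem reduced_nil : Reduced G [] := by
  simp [Reduced]

theorem reduced_cons_iff {x : α} {L : List α} :
    Reduced G (x :: L) ↔ ¬ IsInitial G x L ∧ Reduced G L := by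
  simp only [Reduced, List.suffix_cons_iff, List.cons.injEq]
  constructor
  · exact fun h => ⟨h x L (.inl ⟨rfl, rfl⟩), fun e B hB => h e B (.inr hB)⟩
  · rintro ⟨hx, hL⟩ e B (⟨rfl, rfl⟩ | hB)
    exacts [hx, hL e B hB]

open Classical in
/-- Multiplication of a reduced word by the generator `e` in the right-angled Coxeter group: an
initial occurrence of `e` is deleted, and if there is none then `e` is inserted. -/
noncomputable def insertCancel (G : SimpleGraph α) (e : α) : List α → List α
  | [] => [e]
  | x :: L => if x = e then L else if G.Adj e x then x :: insertCancel G e L else e :: x :: L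

theorem insertCancel_cons_self (e : α) (L : List α) : insertCancel G e (e :: L) = L :=
  if_pos rfl

theorem insertCancel_cons_of_adj {e x : α} (h : G.Adj e x) (L : List α) :
    insertCancel G e (x :: L) = x :: insertCancel G e L := by
  rw [insertCancel, if_neg h.ne', if_pos h]

theorem insertCancel_cons_of_not_adj {e x : α} (hne : x ≠ e) (h : ¬ G.Adj e x) (L : List α) :
    insertCancel G e (x :: L) = e :: x :: L := by
  rw [insertCancel, if_neg hne, if_neg h]

theorem insertCancel_traceEq_cons {e : α} {L : List α} (h : ¬ IsInitial G e L) :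
    TraceEq G (insertCancel G e L) (e :: L) := by
  induction L with
  | nil => exact .refl _
  | cons x L ih =>
    rw [isInitial_cons_iff, not_or, not_and] at h
    obtain ⟨hne, hL⟩ := h
    by_cases hadj : G.Adj e x
    · rw [insertCancel_cons_of_adj hadj]
      exact (TraceEq.cons x (ih (hL hadj))).trans (.swap L hadj.symm)
    · rw [insertCancel_cons_of_not_adj hne hadj]
      exact .refl _

theorem insertCancel_insertCancel_traceEq {e : α} {L : List α} (h : Reduced G L) :
    TraceEq G (insertCancel G e (insertCancel G e L)) L := by
  induction L with
  | nil => simpa only [insertCancel_cons_self, insertCancel] using .refl []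
  | cons x L ih =>
    obtain ⟨hx, hL⟩ := reduced_cons_iff.1 h
    rcases eq_or_ne x e with rfl | hne
    · rw [insertCancel_cons_self]
      exact insertCancel_traceEq_cons hx
    by_cases hadj : G.Adj e x
    · rw [insertCancel_cons_of_adj hadj, insertCancel_cons_of_adj hadj]
      exact .cons x (ih hL)
    · rw [insertCancel_cons_of_not_adj hne hadj, insertCancel_cons_self]
      exact .refl _

theorem not_isInitial_insertCancel {x e : α} (hxe : G.Adj x e) {L : List α}
    (h : ¬ IsInitial G x L) : ¬ IsInitial G x (insertCancel G e L) := by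
  induction L with
  | nil =>
    rw [insertCancel, isInitial_cons_iff]
    exact not_or.2 ⟨hxe.ne', fun hx => not_isInitial_nil x hx.2⟩
  | cons y L ih =>
    have hyL := h
    rw [isInitial_cons_iff, not_or, not_and] at h
    rcases eq_or_ne y e with rfl | hne
    · rw [insertCancel_cons_self]
      exact h.2 hxe
    by_cases hadj : G.Adj e y
    · rw [insertCancel_cons_of_adj hadj, isInitial_cons_iff, not_or, not_and]
      exact ⟨h.1, fun hxy => ih (h.2 hxy)⟩
    · rw [insertCancel_cons_of_not_adj hne hadj, isInitial_cons_iff, not_or, not_and]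
      exact ⟨hxe.ne', fun _ => hyL⟩

theorem Reduced.insertCancel {e : α} {L : List α} (h : Reduced G L) :
    Reduced G (insertCancel G e L) := by
  induction L with
  | nil => exact reduced_cons_iff.2 ⟨not_isInitial_nil e, reduced_nil⟩
  | cons y L ih =>
    obtain ⟨hy, hL⟩ := reduced_cons_iff.1 h
    rcases eq_or_ne y e with rfl | hne
    · rwa [insertCancel_cons_self]
    by_cases hadj : G.Adj e y
    · rw [insertCancel_cons_of_adj hadj, reduced_cons_iff]
      exact ⟨not_isInitial_insertCancel hadj.symm hy, ih hL⟩
    · rw [insertCancel_cons_of_not_adj hne hadj, reduced_cons_iff, isInitial_cons_iff]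
      exact ⟨not_or.2 ⟨hne, fun he => hadj he.1⟩, h⟩

theorem TraceEq.insertCancel {e : α} {L M : List α} (h : TraceEq G L M) :
    TraceEq G (insertCancel G e L) (insertCancel G e M) := by
  induction h with
  | refl L => exact .refl _
  | symm _ ih => exact ih.symm
  | trans _ _ ih₁ ih₂ => exact ih₁.trans ih₂
  | cons x h ih =>
    simp only [OneTermBracket.insertCancel]
    split_ifs
    exacts [h, .cons x ih, .cons e (.cons x h)]
  | @swap x y L h =>
    rcases eq_or_ne x e with rfl | hx
    · rw [insertCancel_cons_self, insertCancel_cons_of_adj h, insertCancel_cons_self]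
      exact .refl _
    rcases eq_or_ne y e with rfl | hy
    · rw [insertCancel_cons_self, insertCancel_cons_of_adj h.symm, insertCancel_cons_self]
      exact .refl _
    simp only [OneTermBracket.insertCancel, if_neg hx, if_neg hy]
    split_ifs with hex hey hey
    · exact .swap _ h
    · exact (TraceEq.swap _ hex.symm).trans (.cons e (.swap L h))
    · exact (TraceEq.cons e (.swap L h)).trans (.swap _ hey)
    · exact .cons e (.swap L h)

theorem insertCancel_comm_traceEq {e f : α} (h : G.Adj e f) (L : List α) :
    TraceEq G (insertCancel G e (insertCancel G f L))
      (insertCancel G f (insertCancel G e L)) := by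
  have swap_front (M : List α) : TraceEq G (f :: e :: M) (e :: f :: M) := .swap M h.symm
  induction L with
  | nil =>
    simpa only [insertCancel, if_neg h.ne, if_neg h.ne', if_pos h, if_pos h.symm]
      using swap_front []
  | cons x L ih =>
    rcases eq_or_ne x e with rfl | hxe
    · simpa only [insertCancel, if_true, if_neg h.ne, if_pos h.symm] using .refl _
    rcases eq_or_ne x f with rfl | hxf
    · simpa only [insertCancel, if_true, if_neg h.ne', if_pos h] using .refl _
    by_cases hex : G.Adj e x <;> by_cases hfx : G.Adj f x <;>
      simp only [insertCancel, if_neg hxe, if_neg hxf, hex, hfx, if_true, if_false,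
        if_neg h.ne, if_neg h.ne', if_pos h, if_pos h.symm]
    exacts [.cons x ih, .refl _, .refl _, swap_front _]

/-- The reduced word obtained by multiplying the letters of `L` together in the right-angled
Coxeter group of `G`. -/
noncomputable def normalForm (G : SimpleGraph α) (L : List α) : List α :=
  L.foldr (insertCancel G) []

theorem Reduced.foldr_insertCancel (A : List α) {L : List α} (h : Reduced G L) :
    Reduced G (A.foldr (OneTermBracket.insertCancel G) L) := by
  induction A with
  | nil => exact h
  | cons x A ih => exact ih.insertCancel

theorem TraceEq.foldr_insertCancel (A : List α) {L M : List α} (h : TraceEq G L M) :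
    TraceEq G (A.foldr (OneTermBracket.insertCancel G) L)
      (A.foldr (OneTermBracket.insertCancel G) M) := by
  induction A with
  | nil => exact h
  | cons x A ih => exact ih.insertCancel

theorem Reduced.normalForm_traceEq {L : List α} (h : Reduced G L) :
    TraceEq G (normalForm G L) L := by
  induction L with
  | nil => exact .refl _
  | cons x L ih =>
    obtain ⟨hx, hL⟩ := reduced_cons_iff.1 h
    exact (ih hL).insertCancel.trans (insertCancel_traceEq_cons hx)

theorem TraceEq.foldr_insertCancel_congr {A B : List α} (h : TraceEq G A B) (L : List α) :
    TraceEq G (A.foldr (OneTermBracket.insertCancel G) L)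
      (B.foldr (OneTermBracket.insertCancel G) L) := by
  induction h with
  | refl A => exact .refl _
  | symm _ ih => exact ih.symm
  | trans _ _ ih₁ ih₂ => exact ih₁.trans ih₂
  | cons x _ ih => exact ih.insertCancel
  | swap A h => exact insertCancel_comm_traceEq h _

theorem TraceEq.prod_map_eq {M : Type*} [Monoid M] {P : α → M}
    (hP : ∀ ⦃x y⦄, G.Adj x y → Commute (P x) (P y)) {L L' : List α} (h : TraceEq G L L') :
    (L.map P).prod = (L'.map P).prod := by
  induction h with
  | refl L => rfl
  | symm _ ih => exact ih.symm
  | trans _ _ ih₁ ih₂ => exact ih₁.trans ih₂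
  | cons x _ ih => simp only [List.map_cons, List.prod_cons, ih]
  | swap L h => simp only [List.map_cons, List.prod_cons, (hP h).left_comm]

end RightAngledWords

section Permutations

variable {n : ℕ}

open Equiv (Perm)

theorem lo_lt_hi (i : Fin (n - 1)) : lo i < hi i :=
  Nat.lt_succ_self i

theorem sPerm_lo (i : Fin (n - 1)) : sPerm i (lo i) = hi i :=
  Equiv.swap_apply_left _ _

theorem sPerm_hi (i : Fin (n - 1)) : sPerm i (hi i) = lo i :=
  Equiv.swap_apply_right _ _

theorem sPerm_mul_self (i : Fin (n - 1)) : sPerm i * sPerm i = 1 :=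
  Equiv.swap_mul_self _ _

theorem sPerm_inv (i : Fin (n - 1)) : (sPerm i)⁻¹ = sPerm i :=
  Equiv.swap_inv _ _

theorem eq_or_two_le_dist_or_dist_eq_one (i j : Fin (n - 1)) :
    i = j ∨ 2 ≤ Nat.dist i j ∨ Nat.dist i j = 1 := by
  simp only [Fin.ext_iff, Nat.dist]
  omega

theorem sPerm_apply_of_far {i j : Fin (n - 1)} (h : 2 ≤ Nat.dist i j) :
    sPerm j (lo i) = lo i ∧ sPerm j (hi i) = hi i := by
  unfold Nat.dist at h
  constructor <;> apply Equiv.swap_apply_of_ne_of_ne <;>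
    simp only [lo, hi, ne_eq, Fin.mk.injEq] <;> omega

theorem sPerm_apply_of_adjacent {i j : Fin (n - 1)} (h : Nat.dist i j = 1) :
    sPerm i (sPerm j (lo i)) = lo j ∧ sPerm i (sPerm j (hi i)) = hi j := by
  unfold Nat.dist at h
  simp only [sPerm, Equiv.swap_apply_def, lo, hi, Fin.ext_iff]
  grind

theorem sPerm_commute {i j : Fin (n - 1)} (h : 2 ≤ Nat.dist i j) :
    Commute (sPerm i) (sPerm j) := by
  obtain ⟨hlo, hhi⟩ := sPerm_apply_of_far h
  have hji := Equiv.mul_swap_eq_swap_mul (sPerm j) (lo i) (hi i)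
  rw [hlo, hhi] at hji
  exact hji.symm

theorem sPerm_semiconjBy {i j : Fin (n - 1)} (h : Nat.dist i j = 1) :
    SemiconjBy (sPerm i * sPerm j) (sPerm i) (sPerm j) := by
  have hij := Equiv.mul_swap_eq_swap_mul (sPerm i * sPerm j) (lo i) (hi i)
  rwa [Perm.mul_apply, Perm.mul_apply, (sPerm_apply_of_adjacent h).1,
    (sPerm_apply_of_adjacent h).2] at hij

/-- The pair of strands occupying the positions `i` and `i + 1`, where `r` sends each position to
the label of the strand in it. -/
def strandPair (r : Perm (Fin n)) (i : Fin (n - 1)) : Sym2 (Fin n) :=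
  s(r (lo i), r (hi i))

theorem strandPair_mul (σ r : Perm (Fin n)) (i : Fin (n - 1)) :
    strandPair (σ * r) i = (strandPair r i).map σ :=
  rfl

theorem strandPair_mul_self (r : Perm (Fin n)) (i : Fin (n - 1)) :
    strandPair (r * sPerm i) i = strandPair r i := by
  simp only [strandPair, Perm.mul_apply, sPerm_lo, sPerm_hi, Sym2.eq_swap]

theorem strandPair_mul_of_far (r : Perm (Fin n)) {i j : Fin (n - 1)} (h : 2 ≤ Nat.dist i j) :
    strandPair (r * sPerm j) i = strandPair r i := by
  simp only [strandPair, Perm.mul_apply, sPerm_apply_of_far h]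

theorem strandPair_mul_mul_of_adjacent (r : Perm (Fin n)) {i j : Fin (n - 1)}
    (h : Nat.dist i j = 1) : strandPair (r * sPerm i * sPerm j) i = strandPair r j := by
  simp only [strandPair, Perm.mul_apply, sPerm_apply_of_adjacent h]

/-- `i` is a right descent of `σ`: `σ` inverts the positions `i` and `i + 1`. -/
def IsDescent (σ : Perm (Fin n)) (i : Fin (n - 1)) : Prop :=
  σ (hi i) < σ (lo i)

theorem not_isDescent_iff {σ : Perm (Fin n)} {i : Fin (n - 1)} :
    ¬ IsDescent σ i ↔ σ (lo i) < σ (hi i) :=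
  not_lt.trans (σ.injective.ne (lo_lt_hi i).ne).le_iff_lt

theorem isDescent_sPerm (i : Fin (n - 1)) : IsDescent (sPerm i) i := by
  rw [IsDescent, sPerm_lo, sPerm_hi]
  exact lo_lt_hi i

theorem isDescent_mul_of_far {σ : Perm (Fin n)} {i j : Fin (n - 1)} (h : 2 ≤ Nat.dist i j) :
    IsDescent (σ * sPerm j) i ↔ IsDescent σ i := by
  simp only [IsDescent, Perm.mul_apply, sPerm_apply_of_far h]

theorem isDescent_mul_mul_of_adjacent {σ : Perm (Fin n)} {i j : Fin (n - 1)}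
    (h : Nat.dist i j = 1) : IsDescent (σ * sPerm i * sPerm j) i ↔ IsDescent σ j := by
  simp only [IsDescent, Perm.mul_apply, sPerm_apply_of_adjacent h]

/-- In terms of roots: if `σ αᵢ` and `σ αⱼ` are positive, then so is
`σ sⱼ αᵢ = σ αᵢ + σ αⱼ`. -/
theorem IsDescent.or_of_adjacent {σ : Perm (Fin n)} {i j : Fin (n - 1)} (h : Nat.dist i j = 1)
    (hd : IsDescent (σ * sPerm j) i) : IsDescent σ i ∨ IsDescent σ j := by
  unfold Nat.dist at h
  simp only [IsDescent, sPerm, Perm.mul_apply, Equiv.swap_apply_def, lo, hi, Fin.ext_iff] at hd ⊢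
  grind

theorem eq_one_of_forall_not_isDescent {σ : Perm (Fin n)} (h : ∀ i, ¬ IsDescent σ i) :
    σ = 1 := by
  obtain _ | m := n
  · exact Subsingleton.elim _ _
  have hmono : StrictMono σ := Fin.strictMono_iff_lt_succ.2 fun i => not_isDescent_iff.1 (h i)
  have hrefl : hmono.orderIsoOfSurjective σ σ.surjective = OrderIso.refl _ :=
    Subsingleton.elim _ _
  exact Equiv.ext fun a => congrArg (fun g : Fin (m + 1) ≃o Fin (m + 1) => g a) hrefl

theorem exists_prod_map_sPerm_eq (σ : Perm (Fin n)) :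
    ∃ l : List (Fin (n - 1)), (l.map sPerm).prod = σ := by
  obtain _ | m := n
  · exact ⟨[], Subsingleton.elim _ _⟩
  have hσ : σ ∈ Submonoid.closure (Set.range (sPerm (n := m + 1))) :=
    (Equiv.Perm.mclosure_swap_castSucc_succ m).symm ▸ Submonoid.mem_top σ
  obtain ⟨l, hl, rfl⟩ := Submonoid.exists_list_of_mem_closure hσ
  obtain ⟨l, rfl⟩ := (Set.range_list_map sPerm).ge hl
  exact ⟨l, rfl⟩

end Permutations

section CoxeterPresentation

variable {n : ℕ} {N : Type*} [Monoid N]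

open Equiv (Perm)

/-- The elements `u i` of a monoid satisfy the Coxeter relations of the adjacent transpositions of
the symmetric group. -/
structure CoxeterRels (u : Fin (n - 1) → N) : Prop where
  mul_self (i) : u i * u i = 1
  commute {i j : Fin (n - 1)} : 2 ≤ Nat.dist i j → Commute (u i) (u j)
  braid {i j : Fin (n - 1)} : Nat.dist i j = 1 → u i * u j * u i = u j * u i * u j

theorem coxeterRels_sPerm : CoxeterRels (sPerm (n := n)) where
  mul_self := sPerm_mul_self
  commute := sPerm_commute
  braid {i j} h := by
    rw [sPerm_semiconjBy h, mul_assoc]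

theorem CoxeterRels.prodMk {M : Type*} [Monoid M] {u : Fin (n - 1) → N} {v : Fin (n - 1) → M}
    (hu : CoxeterRels u) (hv : CoxeterRels v) : CoxeterRels fun i => (u i, v i) where
  mul_self i := Prod.ext (hu.mul_self i) (hv.mul_self i)
  commute h := (hu.commute h).prod (hv.commute h)
  braid h := Prod.ext (hu.braid h) (hv.braid h)

variable {u : Fin (n - 1) → N} {φ : N →* Perm (Fin n)}

/-- The exchange property, valid in `N` because its proof uses only the Coxeter relations. -/
theorem CoxeterRels.exists_prod_eq_mul_of_isDescent (hu : CoxeterRels u)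
    (hφ : ∀ i, φ (u i) = sPerm i) (l : List (Fin (n - 1))) {i : Fin (n - 1)}
    (hi : IsDescent (φ (l.map u).prod) i) :
    ∃ l' : List (Fin (n - 1)), l'.length < l.length ∧
      (l.map u).prod = (l'.map u).prod * u i := by
  induction hk : l.length using Nat.strong_induction_on generalizing l i with
  | _ k ih =>
  subst hk
  rcases l.eq_nil_or_concat' with rfl | ⟨l₀, j, rfl⟩
  · exact absurd hi (by simpa [not_isDescent_iff] using lo_lt_hi i)
  simp only [List.map_append, List.map_cons, List.map_nil, List.prod_append, List.prod_singleton,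
    List.length_append, List.length_singleton, map_mul, hφ] at hi ih ⊢
  rcases eq_or_two_le_dist_or_dist_eq_one i j with rfl | hij | hij
  · exact ⟨l₀, by omega, rfl⟩
  · obtain ⟨l₁, hlen₁, h₁⟩ := ih _ (by omega) l₀ ((isDescent_mul_of_far hij).1 hi) rfl
    exact ⟨l₁ ++ [j], by simpa using hlen₁, by simp [h₁, mul_assoc, (hu.commute hij).eq]⟩
  rcases hi.or_of_adjacent hij with hi₀ | hj₀
  · obtain ⟨l₁, hlen₁, h₁⟩ := ih _ (by omega) l₀ hi₀ rfl
    have hj₁ : IsDescent (φ (l₁.map u).prod) j := by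
      rw [h₁, map_mul, hφ] at hi
      exact (isDescent_mul_mul_of_adjacent hij).1 hi
    obtain ⟨l₂, hlen₂, h₂⟩ := ih _ (by omega) l₁ hj₁ rfl
    refine ⟨l₂ ++ [i, j], ?_, ?_⟩
    · simp only [List.length_append, List.length_cons, List.length_nil]
      omega
    have hbraid := hu.braid hij
    simp only [h₁, h₂, List.map_append, List.prod_append, List.map_cons, List.map_nil,
      List.prod_cons, List.prod_nil, mul_one, mul_assoc] at hbraid ⊢
    rw [hbraid]
  · obtain ⟨l₁, hlen₁, h₁⟩ := ih _ (by omega) l₀ hj₀ rfl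
    have hl : (l₀.map u).prod * u j = (l₁.map u).prod := by
      rw [h₁, mul_assoc, hu.mul_self, mul_one]
    have hi₁ : IsDescent (φ (l₁.map u).prod) i := by
      rwa [← hl, map_mul, hφ]
    obtain ⟨l₂, hlen₂, h₂⟩ := ih _ (by omega) l₁ hi₁ rfl
    exact ⟨l₂, by omega, by rw [hl, h₂]⟩

theorem CoxeterRels.prod_eq_one (hu : CoxeterRels u) (hφ : ∀ i, φ (u i) = sPerm i)
    (l : List (Fin (n - 1))) (hl : φ (l.map u).prod = 1) : (l.map u).prod = 1 := by
  induction hk : l.length using Nat.strong_induction_on generalizing l with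
  | _ k ih =>
  subst hk
  rcases l.eq_nil_or_concat' with rfl | ⟨l₀, i, rfl⟩
  · rfl
  simp only [List.map_append, List.map_cons, List.map_nil, List.prod_append, List.prod_singleton,
    List.length_append, List.length_singleton, map_mul, hφ] at hl ih ⊢
  have hi : IsDescent (φ (l₀.map u).prod) i := by
    rw [eq_inv_of_mul_eq_one_left hl, sPerm_inv]
    exact isDescent_sPerm i
  obtain ⟨l₁, hlen, h₁⟩ := hu.exists_prod_eq_mul_of_isDescent hφ l₀ hi
  have hcancel : (l₀.map u).prod * u i = (l₁.map u).prod := by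
    rw [h₁, mul_assoc, hu.mul_self, mul_one]
  rw [hcancel]
  exact ih _ (by omega) l₁ (by rw [← hcancel, map_mul, hφ, hl]) rfl

theorem CoxeterRels.prod_eq_prod (hu : CoxeterRels u) (hφ : ∀ i, φ (u i) = sPerm i)
    {l m : List (Fin (n - 1))} (h : φ (l.map u).prod = φ (m.map u).prod) :
    (l.map u).prod = (m.map u).prod := by
  induction m using List.reverseRecOn generalizing l with
  | nil => exact hu.prod_eq_one hφ l (by simpa using h)
  | append_singleton m i ih =>
    have hli : φ ((l ++ [i]).map u).prod = φ (m.map u).prod := by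
      simp [h, hφ, sPerm_mul_self, mul_assoc]
    have := ih hli
    simp only [List.map_append, List.map_cons, List.map_nil, List.prod_append,
      List.prod_singleton] at this ⊢
    rw [← this, mul_assoc, hu.mul_self, mul_one]

theorem CoxeterRels.prod_eq_prod_of_sPerm (hu : CoxeterRels u) {l m : List (Fin (n - 1))}
    (h : (l.map sPerm).prod = (m.map sPerm).prod) : (l.map u).prod = (m.map u).prod := by
  let su : Fin (n - 1) → Perm (Fin n) × N := fun i => (sPerm i, u i)
  have hfst (l : List (Fin (n - 1))) :
      MonoidHom.fst _ _ (l.map su).prod = (l.map sPerm).prod := by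
    rw [map_list_prod, List.map_map]; rfl
  have hsnd (l : List (Fin (n - 1))) :
      MonoidHom.snd _ _ (l.map su).prod = (l.map u).prod := by
    rw [map_list_prod, List.map_map]; rfl
  have hsu : (l.map su).prod = (m.map su).prod :=
    (coxeterRels_sPerm.prodMk hu).prod_eq_prod (φ := MonoidHom.fst _ _) (fun _ => rfl)
      (by rw [hfst, hfst, h])
  rw [← hsnd, hsu, hsnd]

/-- The Coxeter relations present the symmetric group. -/
theorem CoxeterRels.exists_monoidHom (hu : CoxeterRels u) :
    ∃ θ : Perm (Fin n) →* N, ∀ i, θ (sPerm i) = u i := by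
  choose word hword using exists_prod_map_sPerm_eq (n := n)
  have prod_word (l : List (Fin (n - 1))) :
      ((word (l.map sPerm).prod).map u).prod = (l.map u).prod :=
    hu.prod_eq_prod_of_sPerm (hword _)
  let θ : Perm (Fin n) →* N :=
    { toFun := fun σ => ((word σ).map u).prod
      map_one' := prod_word []
      map_mul' := fun σ τ => by simpa [hword] using prod_word (word σ ++ word τ) }
  have hθ (i : Fin (n - 1)) : θ (sPerm i) = ((word (sPerm i)).map u).prod := rfl
  exact ⟨θ, fun i => by simpa [hθ] using prod_word [i]⟩

end CoxeterPresentation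

section StrongRelations

variable {n : ℕ} {M : Type*} [Monoid M]

open Equiv (Perm)

theorem strandPair_one_injective : Function.Injective (strandPair (1 : Perm (Fin n))) := by
  intro i j h
  simp only [strandPair, Perm.one_apply, Sym2.eq_iff, lo, hi, Fin.mk.injEq] at h
  omega

theorem strandPair_inv_mul_eq {r s : Perm (Fin n)} {i j : Fin (n - 1)}
    (h : strandPair r i = strandPair s j) : strandPair (s⁻¹ * r) i = strandPair 1 j := by
  rw [strandPair_mul, h, ← strandPair_mul, inv_mul_cancel]

theorem sPerm_semiconjBy_of_strandPair_eq {σ : Perm (Fin n)} {i j : Fin (n - 1)}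
    (h : strandPair σ i = strandPair 1 j) : SemiconjBy σ (sPerm i) (sPerm j) := by
  have hconj := Equiv.mul_swap_eq_swap_mul σ (lo i) (hi i)
  rcases Sym2.eq_iff.1 h with ⟨hlo, hhi⟩ | ⟨hlo, hhi⟩
  · rwa [hlo, hhi] at hconj
  · rwa [hlo, hhi, Equiv.swap_comm _ ((1 : Perm (Fin n)) (lo j))] at hconj

/-- In terms of roots: if `σ αᵢ = ± αⱼ` and `σ αₖ < 0`, where `i` and `k` are adjacent, then
`σ sₖ αᵢ = σ αᵢ + σ αₖ < 0`, since `αⱼ` is simple. -/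
theorem IsDescent.mul_sPerm_of_adjacent {σ : Perm (Fin n)} {i j k : Fin (n - 1)}
    (hk : IsDescent σ k) (hik : Nat.dist i k = 1) (hσ : strandPair σ i = strandPair 1 j) :
    IsDescent (σ * sPerm k) i := by
  have hne (a b : Fin n) (hab : a ≠ b) : σ a ≠ σ b := σ.injective.ne hab
  have hσ' := Sym2.eq_iff.1 hσ
  unfold Nat.dist at hik
  simp only [IsDescent, sPerm, Perm.mul_apply, Equiv.swap_apply_def, Perm.one_apply, Fin.lt_def,
    lo, hi, Fin.ext_iff, ne_eq] at hk hσ' hne ⊢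
  grind

/-- The relations of strong equivalence hold between the elements `f g` of a monoid. -/
def RespectsStrong (f : Letter n → M) : Prop :=
  ∀ ⦃r₁ r₂⦄, RelStrong n r₁ r₂ → (r₁.map f).prod = (r₂.map f).prod

variable {f : Letter n → M} {θ : Perm (Fin n) →* M}

theorem RespectsStrong.tau_mul_self (hf : RespectsStrong f) (i : Fin (n - 1)) :
    f (.tau i) * f (.tau i) = 1 := by
  simpa using hf (.tt i)

theorem RespectsStrong.commute_zeta_tau_self (hf : RespectsStrong f) (i : Fin (n - 1)) :
    Commute (f (.zeta i)) (f (.tau i)) := by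
  simpa [commute_iff_eq] using hf (.virt i)

theorem RespectsStrong.commute_zeta_zeta (hf : RespectsStrong f) {i j : Fin (n - 1)}
    (h : 2 ≤ Nat.dist i j) : Commute (f (.zeta i)) (f (.zeta j)) := by
  simpa [commute_iff_eq] using hf (.far_zz i j h)

theorem RespectsStrong.commute_zeta_tau (hf : RespectsStrong f) {i j : Fin (n - 1)}
    (h : 2 ≤ Nat.dist i j) : Commute (f (.zeta i)) (f (.tau j)) := by
  simpa [commute_iff_eq] using hf (.far_zt i j h)

theorem RespectsStrong.coxeterRels_tau (hf : RespectsStrong f) :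
    CoxeterRels fun i => f (.tau i) where
  mul_self := hf.tau_mul_self
  commute {i j} h := by simpa [commute_iff_eq] using hf (.far_tt i j h)
  braid {i j} h := by
    unfold Nat.dist at h
    rcases (by omega : (j : ℕ) = i + 1 ∨ (i : ℕ) = j + 1) with hij | hij
    · simpa [mul_assoc] using hf (.r3v i j hij)
    · simpa [mul_assoc] using (hf (.r3v j i hij)).symm

theorem semiconjBy_map_inv {G : Type*} [Group G] {θ : G →* M} {g : G} {x y : M}
    (h : SemiconjBy (θ g) x y) : SemiconjBy (θ g⁻¹) y x := by
  rw [← MonoidHom.coe_toHomUnits] at h ⊢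
  rw [map_inv]
  exact h.units_inv_symm_left

theorem eq_of_semiconjBy_map {G : Type*} [Group G] {θ : G →* M} {g : G} {x y z : M}
    (hy : SemiconjBy (θ g) x y) (hz : SemiconjBy (θ g) x z) : y = z :=
  ((Group.isUnit g).map θ).mul_left_injective (hy.eq.symm.trans hz.eq)

theorem RespectsStrong.semiconjBy_zeta_of_adjacent (hf : RespectsStrong f)
    (hθ : ∀ i, θ (sPerm i) = f (.tau i)) {i j : Fin (n - 1)} (h : Nat.dist i j = 1) :
    SemiconjBy (θ (sPerm i * sPerm j)) (f (.zeta i)) (f (.zeta j)) := by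
  have semi {i j : Fin (n - 1)} (hij : (j : ℕ) = i + 1) :
      SemiconjBy (θ (sPerm i * sPerm j)) (f (.zeta i)) (f (.zeta j)) := by
    simpa [SemiconjBy, hθ, mul_assoc] using hf (.semi i j hij)
  unfold Nat.dist at h
  rcases (by omega : (j : ℕ) = i + 1 ∨ (i : ℕ) = j + 1) with hij | hij
  · exact semi hij
  · simpa only [mul_inv_rev, sPerm_inv] using semiconjBy_map_inv (semi hij)

/-- `σ` is peeled off one right descent `k` at a time. If `k` is adjacent to `i`, then `i` is a
descent of `σ sₖ`, and both are peeled off at once by the relation `τᵢ τₖ ζᵢ = ζₖ τᵢ τₖ`. -/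
theorem RespectsStrong.semiconjBy_zeta (hf : RespectsStrong f)
    (hθ : ∀ i, θ (sPerm i) = f (.tau i)) {σ : Perm (Fin n)} {i j : Fin (n - 1)}
    (h : strandPair σ i = strandPair 1 j) : SemiconjBy (θ σ) (f (.zeta i)) (f (.zeta j)) := by
  obtain ⟨l, rfl⟩ := exists_prod_map_sPerm_eq σ
  induction hm : l.length using Nat.strong_induction_on generalizing l i with
  | _ m ih =>
  subst hm
  have exchange (l : List (Fin (n - 1))) {k} (hk : IsDescent (l.map sPerm).prod k) :=
    coxeterRels_sPerm.exists_prod_eq_mul_of_isDescent (φ := MonoidHom.id _) (fun _ => rfl) l hk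
  by_cases hd : ∃ k, IsDescent (l.map sPerm).prod k
  swap
  · rw [eq_one_of_forall_not_isDescent (not_exists.1 hd)] at h ⊢
    rw [strandPair_one_injective h, map_one]
    exact SemiconjBy.one_left _
  obtain ⟨k, hk⟩ := hd
  obtain ⟨l₁, hlen₁, h₁⟩ := exchange l hk
  have peel {a : Perm (Fin n)} {k' : Fin (n - 1)} (l' : List (Fin (n - 1)))
      (hlen : l'.length < l.length) (hl' : (l.map sPerm).prod = (l'.map sPerm).prod * a)
      (hpair : strandPair ((l'.map sPerm).prod * a) i = strandPair (l'.map sPerm).prod k')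
      (ha : SemiconjBy (θ a) (f (.zeta i)) (f (.zeta k'))) :
      SemiconjBy (θ (l.map sPerm).prod) (f (.zeta i)) (f (.zeta j)) := by
    rw [hl', map_mul]
    exact (ih _ hlen l' (by rw [← hpair, ← hl', h]) rfl).mul_left ha
  rcases eq_or_two_le_dist_or_dist_eq_one i k with rfl | hik | hik
  · refine peel l₁ hlen₁ h₁ (strandPair_mul_self _ _) ?_
    rw [hθ]
    exact (hf.commute_zeta_tau_self i).symm
  · refine peel l₁ hlen₁ h₁ (strandPair_mul_of_far _ hik) ?_
    rw [hθ]
    exact (hf.commute_zeta_tau hik).symm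
  · have hi₁ : IsDescent (l₁.map sPerm).prod i := by
      have := hk.mul_sPerm_of_adjacent hik h
      rwa [h₁, mul_assoc, sPerm_mul_self, mul_one] at this
    obtain ⟨l₂, hlen₂, h₂⟩ := exchange l₁ hi₁
    refine peel l₂ (hlen₂.trans hlen₁) (by rw [h₁, h₂, mul_assoc]) ?_
      (hf.semiconjBy_zeta_of_adjacent hθ hik)
    rw [← mul_assoc, strandPair_mul_mul_of_adjacent _ hik]

/-- The pure element `σ ζᵢ τᵢ σ⁻¹` in which the two strands of the given pair (those that `σ` puts
in the positions `i` and `i + 1`) cross classically once and all the other strands are untouched.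
It is independent of the choice of `σ` and `i`; the junk value on the diagonal is `1`. -/
noncomputable def pureCrossing (f : Letter n → M) (θ : Perm (Fin n) →* M) : Sym2 (Fin n) → M :=
  Function.extend (fun p : Perm (Fin n) × Fin (n - 1) => strandPair p.1 p.2)
    (fun p => θ p.1 * (f (.zeta p.2) * f (.tau p.2)) * θ p.1⁻¹) 1

theorem pureCrossing_eq_one {e : Sym2 (Fin n)} (he : ¬ ∃ r i, strandPair r i = e) :
    pureCrossing f θ e = 1 :=
  Function.extend_apply' _ _ _ fun ⟨p, hp⟩ => he ⟨p.1, p.2, hp⟩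

theorem RespectsStrong.semiconjBy_pureCrossing (hf : RespectsStrong f)
    (hθ : ∀ i, θ (sPerm i) = f (.tau i)) (r : Perm (Fin n)) (i : Fin (n - 1)) :
    SemiconjBy (θ r) (f (.zeta i) * f (.tau i)) (pureCrossing f θ (strandPair r i)) := by
  have slide {r s : Perm (Fin n)} {i j : Fin (n - 1)} (h : strandPair r i = strandPair s j) :
      SemiconjBy (θ (s⁻¹ * r)) (f (.zeta i) * f (.tau i)) (f (.zeta j) * f (.tau j)) := by
    have h' := strandPair_inv_mul_eq h
    refine (hf.semiconjBy_zeta hθ h').mul_right ?_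
    simpa only [hθ] using (sPerm_semiconjBy_of_strandPair_eq h').map θ
  have factors : Function.FactorsThrough
      (fun p : Perm (Fin n) × Fin (n - 1) => θ p.1 * (f (.zeta p.2) * f (.tau p.2)) * θ p.1⁻¹)
      (fun p => strandPair p.1 p.2) := by
    rintro ⟨r, i⟩ ⟨s, j⟩ h
    calc θ r * (f (.zeta i) * f (.tau i)) * θ r⁻¹
        = θ s * (θ (s⁻¹ * r) * (f (.zeta i) * f (.tau i))) * θ r⁻¹ := by
          rw [← mul_assoc (θ s), ← map_mul, mul_inv_cancel_left]
      _ = θ s * (f (.zeta j) * f (.tau j)) * θ (s⁻¹ * r * r⁻¹) := by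
          rw [(slide h).eq, map_mul θ (s⁻¹ * r), mul_assoc, mul_assoc, mul_assoc, mul_assoc,
            mul_assoc]
      _ = θ s * (f (.zeta j) * f (.tau j)) * θ s⁻¹ := by rw [mul_inv_cancel_right]
  have hval := factors.extend_apply 1 (r, i)
  rw [SemiconjBy, pureCrossing, hval, mul_assoc _ (θ r⁻¹), ← map_mul, inv_mul_cancel, map_one,
    mul_one]

theorem RespectsStrong.pureCrossing_mul_self (hf : RespectsStrong f)
    (hθ : ∀ i, θ (sPerm i) = f (.tau i)) (hζ : ∀ i, f (.zeta i) * f (.zeta i) = 1)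
    (e : Sym2 (Fin n)) : pureCrossing f θ e * pureCrossing f θ e = 1 := by
  by_cases he : ∃ r i, strandPair r i = e
  · obtain ⟨r, i, rfl⟩ := he
    have hsq : f (.zeta i) * f (.tau i) * (f (.zeta i) * f (.tau i)) = 1 := by
      rw [(hf.commute_zeta_tau_self i).symm.mul_mul_mul_comm, hζ, hf.tau_mul_self, mul_one]
    have hP := hf.semiconjBy_pureCrossing hθ r i
    exact eq_of_semiconjBy_map (hsq ▸ hP.mul_right hP) (SemiconjBy.one_right _)
  · rw [pureCrossing_eq_one he, mul_one]

/-- Pairs of strands, joined by an edge when they are disjoint. -/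
def strandPairGraph (n : ℕ) : SimpleGraph (Sym2 (Fin n)) where
  Adj e e' := ∀ a ∈ e, a ∉ e'
  symm := ⟨fun _ _ h a ha ha' => h a ha' ha⟩
  loopless := ⟨fun e h => h _ e.out_fst_mem e.out_fst_mem⟩

theorem exists_strandPair_eq_of_adj {r s : Perm (Fin n)} {i j : Fin (n - 1)}
    (h : (strandPairGraph n).Adj (strandPair r i) (strandPair s j)) :
    ∃ (σ : Perm (Fin n)) (k l : Fin (n - 1)), 2 ≤ Nat.dist k l ∧
      strandPair σ k = strandPair r i ∧ strandPair σ l = strandPair s j := by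
  let ends : Fin 4 → Fin n := ![r (lo i), r (hi i), s (lo j), s (hi j)]
  have hends : Function.Injective ends := by
    have hr := r.injective.ne (lo_lt_hi i).ne
    have hs := s.injective.ne (lo_lt_hi j).ne
    simp only [strandPairGraph, strandPair, Sym2.mem_iff] at h
    rw [← List.nodup_ofFn]
    change [r (lo i), r (hi i), s (lo j), s (hi j)].Nodup
    grind
  have hn : 4 ≤ n := by simpa using Fintype.card_le_of_injective ends hends
  obtain ⟨σ, hσ⟩ :=
    Perm.exists_extending_pair (Fin.castLE hn) ends (Fin.castLE_injective hn) hends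
  refine ⟨σ, ⟨0, by omega⟩, ⟨2, by omega⟩, by simp [Nat.dist], ?_, ?_⟩
  · exact congrArg₂ (s(·, ·)) (hσ 0) (hσ 1)
  · exact congrArg₂ (s(·, ·)) (hσ 2) (hσ 3)

theorem RespectsStrong.commute_pureCrossing (hf : RespectsStrong f)
    (hθ : ∀ i, θ (sPerm i) = f (.tau i)) {e e' : Sym2 (Fin n)}
    (h : (strandPairGraph n).Adj e e') : Commute (pureCrossing f θ e) (pureCrossing f θ e') := by
  by_cases he : ∃ r i, strandPair r i = e
  swap
  · rw [pureCrossing_eq_one he]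
    exact Commute.one_left _
  by_cases he' : ∃ r i, strandPair r i = e'
  swap
  · rw [pureCrossing_eq_one he']
    exact Commute.one_right _
  obtain ⟨r, i, rfl⟩ := he
  obtain ⟨s, j, rfl⟩ := he'
  obtain ⟨σ, k, l, hkl, hk, hl⟩ := exists_strandPair_eq_of_adj h
  rw [← hk, ← hl]
  have hlk : 2 ≤ Nat.dist l k := Nat.dist_comm k l ▸ hkl
  have hcomm : Commute (f (.zeta k) * f (.tau k)) (f (.zeta l) * f (.tau l)) :=
    ((hf.commute_zeta_zeta hkl).mul_left (hf.commute_zeta_tau hlk).symm).mul_right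
      ((hf.commute_zeta_tau hkl).mul_left (hf.coxeterRels_tau.commute hkl))
  have hPk := hf.semiconjBy_pureCrossing hθ σ k
  have hPl := hf.semiconjBy_pureCrossing hθ σ l
  exact eq_of_semiconjBy_map (hPk.mul_right hPl) (hcomm.eq ▸ hPl.mul_right hPk)

end StrongRelations

section CrossingWords

variable {n : ℕ}

open Equiv (Perm)

/-- The permutation sending a position below the braid word `w` to the top label of the strand
arriving there; it is the inverse of `permOf w`. -/
def strandLabels (w : List (Letter n)) : Perm (Fin n) :=
  (w.map transOf).prod

theorem strandLabels_cons (g : Letter n) (w : List (Letter n)) :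
    strandLabels (g :: w) = sPerm g.idx * strandLabels w :=
  List.prod_cons

theorem strandLabels_append (A B : List (Letter n)) :
    strandLabels (A ++ B) = strandLabels A * strandLabels B := by
  simp only [strandLabels, List.map_append, List.prod_append]

/-- The pairs of strands at the successive classical crossings of a braid word, where `r` labels
the strands at its top. -/
def crossingWord (r : Perm (Fin n)) : List (Letter n) → List (Sym2 (Fin n))
  | [] => []
  | .zeta i :: w => strandPair r i :: crossingWord (r * sPerm i) w
  | .tau i :: w => crossingWord (r * sPerm i) w

theorem crossingWord_append (r : Perm (Fin n)) (A B : List (Letter n)) :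
    crossingWord r (A ++ B) = crossingWord r A ++ crossingWord (r * strandLabels A) B := by
  induction A generalizing r with
  | nil => rfl
  | cons g A ih =>
    cases g <;>
      simp only [List.cons_append, crossingWord, ih, strandLabels_cons, Letter.idx, mul_assoc]

theorem exists_eq_append_of_crossingWord_eq {r : Perm (Fin n)} {w : List (Letter n)}
    {L₁ L₂ : List (Sym2 (Fin n))} {e : Sym2 (Fin n)} (h : crossingWord r w = L₁ ++ e :: L₂) :
    ∃ A i B, w = A ++ .zeta i :: B ∧ crossingWord r A = L₁ ∧
      strandPair (r * strandLabels A) i = e ∧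
      crossingWord (r * strandLabels (A ++ [.zeta i])) B = L₂ := by
  induction w generalizing r L₁ with
  | nil => simp [crossingWord] at h
  | cons g w ih =>
    have tail {L} (h : crossingWord (r * sPerm g.idx) w = L ++ e :: L₂) :
        ∃ A i B, g :: w = g :: A ++ .zeta i :: B ∧ crossingWord (r * sPerm g.idx) A = L ∧
          strandPair (r * strandLabels (g :: A)) i = e ∧
          crossingWord (r * strandLabels (g :: A ++ [.zeta i])) B = L₂ := by
      obtain ⟨A, i, B, rfl, hA, he, hB⟩ := ih h
      refine ⟨A, i, B, rfl, hA, ?_, ?_⟩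
      · rwa [strandLabels_cons, ← mul_assoc]
      · rwa [List.cons_append, strandLabels_cons, ← mul_assoc]
    rcases g with i | i
    · rcases L₁ with _ | ⟨x, L₁⟩
      · obtain ⟨he, hL₂⟩ := List.cons.inj h
        exact ⟨[], i, w, rfl, rfl, he, by simpa [strandLabels, transOf, Letter.idx] using hL₂⟩
      · obtain ⟨hx, hL⟩ := List.cons.inj h
        obtain ⟨A, k, B, hw, hA, he, hB⟩ := tail hL
        exact ⟨_, k, B, hw, congrArg₂ _ hx hA, he, hB⟩
    · obtain ⟨A, k, B, hw, hA, he, hB⟩ := tail h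
      exact ⟨_, k, B, hw, hA, he, hB⟩

theorem RespectsStrong.map_mul_prod_map {M : Type*} [Monoid M] {f : Letter n → M}
    (hf : RespectsStrong f) {θ : Perm (Fin n) →* M} (hθ : ∀ i, θ (sPerm i) = f (.tau i))
    (r : Perm (Fin n)) (w : List (Letter n)) :
    θ r * (w.map f).prod =
      ((crossingWord r w).map (pureCrossing f θ)).prod * θ (r * strandLabels w) := by
  induction w generalizing r with
  | nil => simp [crossingWord, strandLabels]
  | cons g w ih =>
    rw [strandLabels_cons, ← mul_assoc r, List.map_cons, List.prod_cons, ← mul_assoc]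
    rcases g with i | i
    · have hP : θ r * f (.zeta i) =
          pureCrossing f θ (strandPair r i) * θ (r * sPerm i) := by
        rw [map_mul, ← mul_assoc, ← (hf.semiconjBy_pureCrossing hθ r i).eq, hθ, mul_assoc,
          mul_assoc, hf.tau_mul_self, mul_one]
      rw [hP, mul_assoc (pureCrossing _ _ _), ih, ← mul_assoc]
      rfl
    · rw [← hθ, ← map_mul, ih]
      rfl

theorem RespectsStrong.prod_map_eq_of_strandLabels_eq {M : Type*} [Monoid M] {f : Letter n → M}
    (hf : RespectsStrong f) {θ : Perm (Fin n) →* M} (hθ : ∀ i, θ (sPerm i) = f (.tau i))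
    {w₁ w₂ : List (Letter n)} (hlabels : strandLabels w₁ = strandLabels w₂)
    (hcross : ((crossingWord 1 w₁).map (pureCrossing f θ)).prod =
      ((crossingWord 1 w₂).map (pureCrossing f θ)).prod) :
    (w₁.map f).prod = (w₂.map f).prod := by
  have factor (w) := hf.map_mul_prod_map hθ 1 w
  simp only [map_one, one_mul] at factor
  rw [factor, factor, hcross, hlabels]

theorem respectsStrong_transOf : RespectsStrong (transOf (n := n)) := by
  have virtual (i : Fin (n - 1)) : transOf (.tau i) = sPerm i := rfl
  have classical (i : Fin (n - 1)) : transOf (.zeta i) = sPerm i := rfl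
  intro r₁ r₂ h
  cases h <;> simp only [List.map_cons, List.map_nil, List.prod_cons, List.prod_nil, mul_one,
    virtual, classical]
  case tt i => exact sPerm_mul_self i
  case far_zz i j h => exact sPerm_commute h
  case far_zt i j h => exact sPerm_commute h
  case far_tt i j h => exact sPerm_commute h
  case r3v i j h =>
    simpa only [mul_assoc] using coxeterRels_sPerm.braid (by simp [h, Nat.dist] : Nat.dist i j = 1)
  case semi i j h =>
    simpa only [mul_assoc] using coxeterRels_sPerm.braid (by simp [h, Nat.dist] : Nat.dist i j = 1)

theorem strandLabels_eq_of_relF {r₁ r₂ : List (Letter n)} (h : RelF n r₁ r₂) :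
    strandLabels r₁ = strandLabels r₂ := by
  cases h with
  | strong h => exact respectsStrong_transOf h
  | zz i => exact sPerm_mul_self i

theorem strandPair_adj_of_far (r : Perm (Fin n)) {i j : Fin (n - 1)} (h : 2 ≤ Nat.dist i j) :
    (strandPairGraph n).Adj (strandPair r i) (strandPair r j) := by
  have hne {a b : Fin n} (hab : (a : ℕ) ≠ b) : r a ≠ r b :=
    r.injective.ne fun h => hab (congrArg Fin.val h)
  unfold Nat.dist at h
  intro a ha ha'
  rcases Sym2.mem_iff.1 ha with rfl | rfl <;> rcases Sym2.mem_iff.1 ha' with ha' | ha' <;>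
    refine hne ?_ ha' <;> simp only [lo, hi] <;> omega

theorem crossingWord_traceEq_of_relStrong {r₁ r₂ : List (Letter n)} (h : RelStrong n r₁ r₂)
    (r : Perm (Fin n)) :
    TraceEq (strandPairGraph n) (crossingWord r r₁) (crossingWord r r₂) := by
  cases h <;> simp only [crossingWord, strandPair_mul_self]
  case far_zz i j h =>
    rw [strandPair_mul_of_far r h, strandPair_mul_of_far r (Nat.dist_comm i j ▸ h)]
    exact .swap _ (strandPair_adj_of_far r h)
  case far_zt i j h =>
    rw [strandPair_mul_of_far r h]
    exact .refl _
  case semi i j h =>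
    rw [strandPair_mul_mul_of_adjacent r (by simp [h, Nat.dist])]
    exact .refl _
  all_goals exact .refl _

theorem foldr_insertCancel_crossingWord_traceEq {r₁ r₂ : List (Letter n)} (h : RelF n r₁ r₂)
    (r : Perm (Fin n)) {L : List (Sym2 (Fin n))} (hL : Reduced (strandPairGraph n) L) :
    TraceEq (strandPairGraph n) ((crossingWord r r₁).foldr (insertCancel (strandPairGraph n)) L)
      ((crossingWord r r₂).foldr (insertCancel (strandPairGraph n)) L) := by
  cases h with
  | strong h => exact (crossingWord_traceEq_of_relStrong h r).foldr_insertCancel_congr L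
  | zz i =>
    simp only [crossingWord, strandPair_mul_self]
    exact insertCancel_insertCancel_traceEq hL

theorem EqF.strandLabels_eq {w₁ w₂ : List (Letter n)} (h : EqF w₁ w₂) :
    strandLabels w₁ = strandLabels w₂ := by
  induction h with
  | rel _ _ h =>
    obtain ⟨A, B, r₁, r₂, hr, rfl, rfl⟩ := h
    simp only [strandLabels_append, strandLabels_eq_of_relF hr]
  | refl => rfl
  | symm _ _ _ ih => exact ih.symm
  | trans _ _ _ _ _ ih₁ ih₂ => exact ih₁.trans ih₂

theorem EqF.normalForm_traceEq {w₁ w₂ : List (Letter n)} (h : EqF w₁ w₂) :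
    TraceEq (strandPairGraph n) (normalForm (strandPairGraph n) (crossingWord 1 w₁))
      (normalForm (strandPairGraph n) (crossingWord 1 w₂)) := by
  induction h with
  | rel _ _ h =>
    obtain ⟨A, B, r₁, r₂, hr, rfl, rfl⟩ := h
    simp only [crossingWord_append, strandLabels_append, strandLabels_eq_of_relF hr, normalForm,
      List.foldr_append]
    exact (foldr_insertCancel_crossingWord_traceEq hr _
      (reduced_nil.foldr_insertCancel _)).foldr_insertCancel _
  | refl => exact .refl _
  | symm _ _ _ ih => exact ih.symm
  | trans _ _ _ _ _ ih₁ ih₂ => exact ih₁.trans ih₂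

end CrossingWords

section Bigons

variable {n : ℕ}

theorem inv_prefPerm (w : List (Letter n)) (j : ℕ) :
    (prefPerm w j)⁻¹ = strandLabels (w.take j) := by
  rw [prefPerm, List.prod_inv_reverse, List.map_reverse, List.reverse_reverse, List.map_map]
  exact congrArg List.prod (List.map_congr_left fun g _ => sPerm_inv g.idx)

theorem strandsAt_length_append_cons (A B : List (Letter n)) (g : Letter n) :
    strandsAt (A ++ g :: B) A.length = some (strandPair (strandLabels A) g.idx) := by
  simp [strandsAt, inv_prefPerm, strandPair]

theorem mem_zetaPos_iff {w : List (Letter n)} {j : ℕ} :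
    j ∈ ZetaPos w ↔ ∃ A i B, w = A ++ .zeta i :: B ∧ A.length = j := by
  constructor
  · rintro ⟨i, hi⟩
    obtain ⟨hj, hi⟩ := List.getElem?_eq_some_iff.1 hi
    refine ⟨w.take j, i, w.drop (j + 1), ?_, List.length_take_of_le hj.le⟩
    rw [← hi, ← List.drop_eq_getElem_cons hj, List.take_append_drop]
  · rintro ⟨A, i, B, rfl, rfl⟩
    exact ⟨i, by simp⟩

theorem mem_zetaPos_append_iff {A B : List (Letter n)} {j : ℕ} (hj : j < A.length) :
    j ∈ ZetaPos (A ++ B) ↔ j ∈ ZetaPos A := by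
  simp only [ZetaPos, Set.mem_ofPred_eq, List.getElem?_append_left hj]

theorem length_add_mem_zetaPos_append_iff {A B : List (Letter n)} {j : ℕ} :
    A.length + j ∈ ZetaPos (A ++ B) ↔ j ∈ ZetaPos B := by
  simp only [ZetaPos, Set.mem_ofPred_eq, List.getElem?_append_right (Nat.le_add_right _ _),
    Nat.add_sub_cancel_left]

theorem mem_crossingWord_iff {A B C : List (Letter n)} {x : Sym2 (Fin n)} :
    x ∈ crossingWord (strandLabels A) B ↔ ∃ k < B.length,
      A.length + k ∈ ZetaPos (A ++ (B ++ C)) ∧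
        strandsAt (A ++ (B ++ C)) (A.length + k) = some x := by
  have strandsAt_eq (B₁ B₂ : List (Letter n)) (i : Fin (n - 1)) :
      strandsAt (A ++ (B₁ ++ .zeta i :: B₂ ++ C)) (A.length + B₁.length) =
        some (strandPair (strandLabels A * strandLabels B₁) i) := by
    rw [← strandLabels_append, ← List.length_append, List.append_assoc, ← List.append_assoc]
    exact strandsAt_length_append_cons (A ++ B₁) (B₂ ++ C) (.zeta i)
  constructor
  · intro hx
    obtain ⟨L₁, L₂, hL⟩ := List.mem_iff_append.1 hx
    obtain ⟨B₁, i, B₂, rfl, -, rfl, -⟩ := exists_eq_append_of_crossingWord_eq hL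
    refine ⟨B₁.length, by simp, ?_, strandsAt_eq B₁ B₂ i⟩
    exact length_add_mem_zetaPos_append_iff.2 (mem_zetaPos_iff.2 ⟨B₁, i, B₂ ++ C, by simp, rfl⟩)
  · rintro ⟨k, hkB, hk, hx⟩
    rw [length_add_mem_zetaPos_append_iff, mem_zetaPos_append_iff hkB, mem_zetaPos_iff] at hk
    obtain ⟨B₁, i, B₂, rfl, rfl⟩ := hk
    rw [strandsAt_eq, Option.some.injEq] at hx
    simp [crossingWord_append, crossingWord, hx]

theorem isBigon_append_iff {A B C : List (Letter n)} {i j : Fin (n - 1)} :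
    IsBigon (A ++ .zeta i :: (B ++ .zeta j :: C)) A.length (A.length + 1 + B.length) ↔
      strandPair (strandLabels A) i = strandPair (strandLabels (A ++ .zeta i :: B)) j ∧
        ∀ x ∈ crossingWord (strandLabels (A ++ [.zeta i])) B,
          (strandPairGraph n).Adj (strandPair (strandLabels A) i) x := by
  have first := strandsAt_length_append_cons A (B ++ .zeta j :: C) (.zeta i)
  have second : strandsAt (A ++ .zeta i :: (B ++ .zeta j :: C)) (A.length + 1 + B.length) =
      some (strandPair (strandLabels (A ++ .zeta i :: B)) j) := by
    simpa [Letter.idx, add_assoc, add_comm 1] using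
      strandsAt_length_append_cons (A ++ .zeta i :: B) C (.zeta j)
  have between (x) := mem_crossingWord_iff (A := A ++ [.zeta i]) (B := B) (C := .zeta j :: C)
    (x := x)
  simp only [List.append_assoc, List.singleton_append, List.length_append,
    List.length_singleton] at between
  simp only [IsBigon, first, second, between, Option.some.injEq]
  constructor
  · rintro ⟨-, -, -, hij, h⟩
    refine ⟨hij, ?_⟩
    rintro x ⟨k, hkB, hk, hx⟩
    exact h _ (by omega) (by omega) hk _ _ rfl hx
  · rintro ⟨hij, h⟩
    refine ⟨by omega, ⟨i, by simp⟩, ⟨j, by simp [add_assoc, add_comm 1]⟩, hij, ?_⟩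
    rintro k hAk hkB hk _ x rfl hx
    obtain ⟨k, rfl⟩ := Nat.exists_eq_add_of_le (Nat.succ_le_of_lt hAk)
    exact h x ⟨k, by omega, hk, hx⟩

theorem Irreducible.reduced_crossingWord {w : List (Letter n)} (hw : Irreducible w) :
    Reduced (strandPairGraph n) (crossingWord 1 w) := by
  rintro e L ⟨K, hK⟩ ⟨L₁, L₂, rfl, hL₁⟩
  obtain ⟨A, i, D, rfl, -, rfl, hD⟩ := exists_eq_append_of_crossingWord_eq hK.symm
  obtain ⟨B, j, C, rfl, rfl, hj, -⟩ := exists_eq_append_of_crossingWord_eq hD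
  rw [one_mul] at hL₁ hj
  rw [one_mul, ← strandLabels_append, List.append_assoc] at hj
  exact hw ⟨_, _, isBigon_append_iff.2 ⟨hj.symm, hL₁⟩⟩

theorem IsBigon.exists_eq_append {w : List (Letter n)} {j₁ j₂ : ℕ} (h : IsBigon w j₁ j₂) :
    ∃ A i B j C, w = A ++ .zeta i :: (B ++ .zeta j :: C) ∧ A.length = j₁ ∧
      A.length + 1 + B.length = j₂ := by
  obtain ⟨hlt, h₁, h₂, -⟩ := h
  obtain ⟨D, j, C, rfl, rfl⟩ := mem_zetaPos_iff.1 h₂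
  obtain ⟨A, i, B, rfl, rfl⟩ := mem_zetaPos_iff.1 ((mem_zetaPos_append_iff hlt).1 h₁)
  exact ⟨A, i, B, j, C, by simp, rfl, by simp [add_assoc, add_comm 1]⟩

end Bigons

section PresentedMonoid

variable {n : ℕ}

theorem eqvGen_stepOf_append {R : List (Letter n) → List (Letter n) → Prop}
    {w₁ w₂ : List (Letter n)} (h : Relation.EqvGen (StepOf R) w₁ w₂) (A B : List (Letter n)) :
    Relation.EqvGen (StepOf R) (A ++ w₁ ++ B) (A ++ w₂ ++ B) := by
  induction h with
  | rel _ _ h =>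
    obtain ⟨C, D, r₁, r₂, hr, rfl, rfl⟩ := h
    exact .rel _ _ ⟨A ++ C, D ++ B, r₁, r₂, hr, by simp, by simp⟩
  | refl => exact .refl _
  | symm _ _ _ ih => exact .symm _ _ ih
  | trans _ _ _ _ _ ih₁ ih₂ => exact .trans _ _ _ ih₁ ih₂

/-- The congruence on the free monoid on the letters generated by the relations `R`; its quotient
is the monoid presented by `R`. -/
def wordCon (R : List (Letter n) → List (Letter n) → Prop) : Con (FreeMonoid (Letter n)) where
  r a b := Relation.EqvGen (StepOf R) a.toList b.toList
  iseqv := (Relation.EqvGen.is_equivalence _).comap _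
  mul' {a b c d} hab hcd := .trans _ (b.toList ++ c.toList) _
    (by simpa using eqvGen_stepOf_append hab [] c.toList)
    (by simpa using eqvGen_stepOf_append hcd b.toList [])

/-- The class of a single letter in the monoid presented by the relations `R`. -/
def letterClass (R : List (Letter n) → List (Letter n) → Prop) (g : Letter n) :
    (wordCon R).Quotient :=
  (FreeMonoid.of g : FreeMonoid (Letter n))

variable {R : List (Letter n) → List (Letter n) → Prop}

theorem prod_map_letterClass_eq_iff {w₁ w₂ : List (Letter n)} :
    (w₁.map (letterClass R)).prod = (w₂.map (letterClass R)).prod ↔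
      Relation.EqvGen (StepOf R) w₁ w₂ := by
  have lift_eq : FreeMonoid.lift (letterClass R) = (wordCon R).mk' :=
    FreeMonoid.hom_eq fun _ => FreeMonoid.lift_eval_of _ _
  have prod_eq (w : List (Letter n)) :
      (w.map (letterClass R)).prod = (wordCon R).mk' (FreeMonoid.ofList w) := by
    rw [← lift_eq, FreeMonoid.lift_apply, FreeMonoid.toList_ofList]
  rw [prod_eq, prod_eq]
  exact (wordCon R).eq

theorem prod_map_letterClass_eq_of_rel {r₁ r₂ : List (Letter n)} (h : R r₁ r₂) :
    (r₁.map (letterClass R)).prod = (r₂.map (letterClass R)).prod :=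
  prod_map_letterClass_eq_iff.2 (.rel _ _ ⟨[], [], r₁, r₂, h, by simp, by simp⟩)

end PresentedMonoid

section Representatives

variable {n : ℕ}

theorem strongEq_of_traceEq {w₁ w₂ : List (Letter n)}
    (h : TraceEq (strandPairGraph n) (crossingWord 1 w₁) (crossingWord 1 w₂))
    (hlabels : strandLabels w₁ = strandLabels w₂) : StrongEq w₁ w₂ := by
  have hf : RespectsStrong (letterClass (RelStrong n)) := fun _ _ => prod_map_letterClass_eq_of_rel
  obtain ⟨θ, hθ⟩ := hf.coxeterRels_tau.exists_monoidHom
  refine prod_map_letterClass_eq_iff.1 ?_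
  refine hf.prod_map_eq_of_strandLabels_eq hθ hlabels ?_
  exact h.prod_map_eq fun _ _ hadj => hf.commute_pureCrossing hθ hadj

theorem eqF_tau_tau_of_bigon {A B C : List (Letter n)} {i j : Fin (n - 1)}
    (hij : strandPair (strandLabels A) i = strandPair (strandLabels (A ++ .zeta i :: B)) j)
    (hB : ∀ x ∈ crossingWord (strandLabels (A ++ [.zeta i])) B,
      (strandPairGraph n).Adj (strandPair (strandLabels A) i) x) :
    EqF (A ++ .zeta i :: (B ++ .zeta j :: C)) (A ++ .tau i :: (B ++ .tau j :: C)) := by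
  have hf : RespectsStrong (letterClass (RelF n)) :=
    fun _ _ h => prod_map_letterClass_eq_of_rel (.strong h)
  have hζ (i : Fin (n - 1)) :
      letterClass (RelF n) (.zeta i) * letterClass (RelF n) (.zeta i) = 1 := by
    simpa using prod_map_letterClass_eq_of_rel (RelF.zz i)
  obtain ⟨θ, hθ⟩ := hf.coxeterRels_tau.exists_monoidHom
  refine prod_map_letterClass_eq_iff.1 (hf.prod_map_eq_of_strandLabels_eq hθ ?_ ?_)
  · simp only [strandLabels_append, strandLabels_cons, Letter.idx]
  simp only [strandLabels_append, strandLabels_cons, Letter.idx, ← mul_assoc] at hij hB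
  simp only [crossingWord_append, crossingWord, List.map_append, List.map_cons, List.prod_append,
    List.prod_cons, one_mul]
  set e := strandPair (strandLabels A) i
  set u := crossingWord (strandLabels A * sPerm i) B
  have hcomm : Commute (pureCrossing (letterClass (RelF n)) θ e)
      (u.map (pureCrossing (letterClass (RelF n)) θ)).prod := by
    refine Commute.list_prod_right _ _ fun y hy => ?_
    obtain ⟨x, hx, rfl⟩ := List.mem_map.1 hy
    exact hf.commute_pureCrossing hθ (hB x hx)
  rw [← hij, hcomm.left_comm, ← mul_assoc (pureCrossing _ _ _), hf.pureCrossing_mul_self hθ hζ,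
    one_mul]

theorem exists_eqF_countZeta_lt {w : List (Letter n)} (hw : ¬ Irreducible w) :
    ∃ w', EqF w w' ∧ countZeta w' < countZeta w := by
  obtain ⟨j₁, j₂, h⟩ := not_not.1 hw
  obtain ⟨A, i, B, j, C, rfl, rfl, rfl⟩ := h.exists_eq_append
  obtain ⟨hij, hB⟩ := isBigon_append_iff.1 h
  exact ⟨_, eqF_tau_tau_of_bigon hij hB, by simp [countZeta, Letter.isZeta, List.filter_cons]⟩

theorem exists_eqF_irreducible (w : List (Letter n)) : ∃ w₀, EqF w w₀ ∧ Irreducible w₀ := by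
  induction hm : countZeta w using Nat.strong_induction_on generalizing w with
  | _ m ih =>
  by_cases hw : Irreducible w
  · exact ⟨w, .refl _, hw⟩
  · obtain ⟨w', hww', hlt⟩ := exists_eqF_countZeta_lt hw
    obtain ⟨w₀, hw'w₀, hw₀⟩ := ih _ (hm ▸ hlt) w' rfl
    exact ⟨w₀, .trans _ _ _ hww' hw'w₀, hw₀⟩

end Representatives

/-- every element of `F_n` has an irreducible representative, and any
two irreducible braid words representing the same element are strongly equivalent. -/
theorem irreducible_representatives (n : ℕ) (w : List (Letter n)) :
    (∃ w0, EqF w w0 ∧ Irreducible w0) ∧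
    ∀ w1 w2, EqF w w1 → EqF w w2 → Irreducible w1 → Irreducible w2 →
      StrongEq w1 w2 := by
  refine ⟨exists_eqF_irreducible w, fun w1 w2 hw1 hw2 hirr1 hirr2 => ?_⟩
  have hw12 : EqF w1 w2 := .trans _ _ _ (.symm _ _ hw1) hw2
  refine strongEq_of_traceEq ?_ hw12.strandLabels_eq
  exact hirr1.reduced_crossingWord.normalForm_traceEq.symm.trans
    (hw12.normalForm_traceEq.trans hirr2.reduced_crossingWord.normalForm_traceEq)

end OneTermBracket
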